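/- Assume (Σ_n, T, (φ_n)) satisfies property (H*) with Hölder parameter r. Then for every k ∈ ℕ₀, with l_k := n_k + m_{k+n_k}, and all Borel probability measures μ_{k+l_k}, ν_{k+l_k} on Σ_{k+l_k}, one has W_k((ℒ^{l_k}_k)*(μ_{k+l_k}), (ℒ^{l_k}_k)*(ν_{k+l_k})) ≤ t_k · W_{k+l_k}(μ_{k+l_k}, ν_{k+l_k}), where t_k := max{β, 1 − (1 − r^{n_k} α_k) C_{k+n_k}/B_{k+n_k}} ∈ (0,1). -/

import Mathlib

open MeasureTheory Real Filter

namespace NSShift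

/-- The ambient sequence space `ℕ^ℕ`. -/
abbrev Seq := ℕ → ℕ

/-- The shift map `T`. -/
def shift (x : Seq) : Seq := fun i => x (i + 1)

/-- Prepend one symbol to a sequence. -/
def cons (a : ℕ) (x : Seq) : Seq := fun i =>
  match i with
  | 0 => a
  | j + 1 => x j

/-- The non-stationary shift space `Σ_n` determined by alphabets `W` and
transition relations `A` (`A n i j` means `α^n_{ij} = 1`). -/
def Sig (W : ℕ → Set ℕ) (A : ℕ → ℕ → ℕ → Prop) (n : ℕ) : Set Seq :=
  {x | (∀ i, x i ∈ W (n + i)) ∧ ∀ i, A (n + i) (x i) (x (i + 1))}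

/-- `x` and `y` agree in their first `k` coordinates (lie in a common `k`-cylinder). -/
def agrees (x y : Seq) (k : ℕ) : Prop := ∀ i < k, x i = y i

open scoped Classical in
/-- The shift metric `d_r(x,y) = r^{min{i : x_i ≠ y_i}}`. -/
noncomputable def dr (r : ℝ) (x y : Seq) : ℝ :=
  if x = y then 0 else r ^ sInf {i | x i ≠ y i}

/-- `f` is locally `(r,m)`-Hölder continuous with Hölder constant `κ` of index `m` on `S`:
`V_k(f) ≤ κ r^k` for all `k ≥ m`. -/
def HolderOn (S : Set Seq) (r κ : ℝ) (m : ℕ) (f : Seq → ℝ) : Prop :=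
  ∀ k, m ≤ k → ∀ x ∈ S, ∀ y ∈ S, agrees x y k → |f x - f y| ≤ κ * r ^ k

/-- The Birkhoff sum `S_n(φ_k) = Σ_{i=0}^{n-1} φ_{k+i} ∘ T^i`. -/
noncomputable def birkhoff (φ : ℕ → Seq → ℝ) (k n : ℕ) (x : Seq) : ℝ :=
  ∑ i ∈ Finset.range n, φ (k + i) (shift^[i] x)

/-- `log B_m = Σ_{i=1}^{m} κ_{m−i} r^i`. -/
noncomputable def logB (κ : ℕ → ℝ) (r : ℝ) (m : ℕ) : ℝ :=
  ∑ i ∈ Finset.Icc 1 m, κ (m - i) * r ^ i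

/-- `B_m = exp Σ_{i=1}^{m} κ_{m−i} r^i`. -/
noncomputable def Bconst (κ : ℕ → ℝ) (r : ℝ) (m : ℕ) : ℝ := Real.exp (logB κ r m)


open scoped Classical in
/-- The Ruelle operator `ℒ_k(f)(x) = Σ_{Ty=x} e^{φ_k(y)} f(y)`, for `x ∈ Σ_{k+1}`. -/
noncomputable def Ruelle (W : ℕ → Set ℕ) (A : ℕ → ℕ → ℕ → Prop) (φ : ℕ → Seq → ℝ)
    (k : ℕ) (f : Seq → ℝ) (x : Seq) : ℝ :=
  ∑' a : ℕ, if cons a x ∈ Sig W A k then Real.exp (φ k (cons a x)) * f (cons a x) else 0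

/-- The iterated Ruelle operator `ℒ^n_k = ℒ_{k+n-1} ∘ ⋯ ∘ ℒ_k`. -/
noncomputable def RuelleIter (W : ℕ → Set ℕ) (A : ℕ → ℕ → ℕ → Prop) (φ : ℕ → Seq → ℝ)
    (k : ℕ) : ℕ → (Seq → ℝ) → Seq → ℝ
  | 0 => fun f => f
  | n + 1 => fun f => Ruelle W A φ (k + n) (RuelleIter W A φ k n f)

/-- `w` is a `k`-admissible word of length `len`. -/
def Adm (W : ℕ → Set ℕ) (A : ℕ → ℕ → ℕ → Prop) (k : ℕ) (w : ℕ → ℕ) (len : ℕ) : Prop :=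
  (∀ i < len, w i ∈ W (k + i)) ∧ ∀ i, i + 1 < len → A (k + i) (w i) (w (i + 1))

/-- Prepend the first `len` symbols of `w` to the sequence `x` (the inverse branch `τ_w`). -/
def prepend (w : ℕ → ℕ) (len : ℕ) (x : Seq) : Seq := fun i =>
  if i < len then w i else x (i - len)

/-- The Lipschitz constant of `f` on `S` with respect to the distance function `d`,
as the least constant `K ≥ 0` with `|f x − f y| ≤ K d(x,y)` on `S`. -/
noncomputable def LipC (S : Set Seq) (d : Seq → Seq → ℝ) (f : Seq → ℝ) : ℝ :=
  sInf {K : ℝ | 0 ≤ K ∧ ∀ x ∈ S, ∀ y ∈ S, |f x - f y| ≤ K * d x y}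

/-- The Vasershtein (Wasserstein) distance of two Borel measures with respect to the
cost function `d`, as the infimum of `∫ d dm` over couplings `m`. -/
noncomputable def Wass (d : Seq → Seq → ℝ) (μ ν : Measure Seq) : ℝ :=
  sInf {t : ℝ | ∃ m : Measure (Seq × Seq),
    m.map Prod.fst = μ ∧ m.map Prod.snd = ν ∧ t = ∫ p, d p.1 p.2 ∂m}

/-- The dual Ruelle operator `ℒ^*_k` on Borel measures, satisfying
`∫ f d(ℒ^*_k μ) = ∫ ℒ_k(f) dμ`. -/
noncomputable def dualRuelle (W : ℕ → Set ℕ) (A : ℕ → ℕ → ℕ → Prop) (φ : ℕ → Seq → ℝ)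
    (k : ℕ) (μ : Measure Seq) : Measure Seq :=
  Measure.sum fun a : ℕ =>
    (μ.withDensity fun x =>
      ENNReal.ofReal ((Sig W A k).indicator (fun y => Real.exp (φ k y)) (cons a x))).map (cons a)

/-- The iterated dual operator `(ℒ^n_k)^* = ℒ^*_k ∘ ⋯ ∘ ℒ^*_{k+n-1}`. -/
noncomputable def dualRuelleIter (W : ℕ → Set ℕ) (A : ℕ → ℕ → ℕ → Prop) (φ : ℕ → Seq → ℝ) :
    (k : ℕ) → ℕ → Measure Seq → Measure Seq
  | _, 0, μ => μ
  | k, n + 1, μ => dualRuelle W A φ k (dualRuelleIter W A φ (k + 1) n μ)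

/-- A non-stationary shift space `((Σ_n), T, (φ_n))` satisfying property `(H*)`, together
with the choices of the constants `β`, `n_k`, base letters `o_k`, mixing times `m_k`,
connecting words `u(x)` and lower bounds `C_k` used in the coupling construction. -/
structure HstarSystem where
  /-- the alphabets `𝒲¹_n` -/
  W : ℕ → Set ℕ
  /-- the transition matrices: `A n i j` iff `α^n_{ij} = 1` -/
  A : ℕ → ℕ → ℕ → Prop
  /-- the potentials `φ_n : Σ_n → ℝ` -/
  φ : ℕ → Seq → ℝ
  /-- the Hölder parameter -/
  r : ℝ
  /-- the parameter `β ∈ (0,1)` -/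
  β : ℝ
  /-- the Hölder constants `κ_n` of `φ_n` -/
  κ : ℕ → ℝ
  /-- the finite set `ℐ` from the big preimages property -/
  I : Finset ℕ
  /-- the infinite set `𝒦` from the big preimages property -/
  K : Set ℕ
  /-- the base letters `o_k ∈ 𝒲¹_k` -/
  o : ℕ → ℕ
  /-- the integers `n_k` -/
  nseq : ℕ → ℕ
  /-- the mixing times `m_k` -/
  mseq : ℕ → ℕ
  /-- the connecting words `u(x) ∈ 𝒲^{m_k}_k` (as sequences; only the first `m_k`
  symbols are relevant) -/
  u : ℕ → Seq → Seq
  /-- the constants `C_k` -/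
  Cseq : ℕ → ℝ
  hr : 0 < r ∧ r < 1
  hβ : 0 < β ∧ β < 1
  κnonneg : ∀ n, 0 ≤ κ n
  hKinf : K.Infinite
  /-- no zero rows -/
  row : ∀ n, ∀ i ∈ W n, ∃ j ∈ W (n + 1), A n i j
  /-- no zero columns -/
  col : ∀ n, ∀ i ∈ W (n + 1), ∃ j ∈ W n, A n j i
  /-- topological mixing -/
  mixing : ∀ k : ℕ, ∀ a ∈ W k, ∀ b : ℕ, ∃ N : ℕ, ∀ n, N ≤ n → b ∈ W (k + n) →
    ∃ x ∈ Sig W A k, x 0 = a ∧ x n = b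
  /-- big preimages along `𝒦` -/
  bigPre : ∀ n ∈ K, 1 ≤ n → ∀ a ∈ W n, ∃ b ∈ I, (b : ℕ) ∈ W (n - 1) ∧ A (n - 1) b a
  /-- `ℒ_n(1) = 1` -/
  normalized : ∀ k, ∀ x ∈ Sig W A (k + 1), Ruelle W A φ k (fun _ => 1) x = 1
  /-- `φ_n` is locally `(r,2)`-Hölder for `n ∉ 𝒦` -/
  holder2 : ∀ n ∉ K, HolderOn (Sig W A n) r (κ n) 2 (φ n)
  /-- `φ_n` is locally `(r,1)`-Hölder for `n ∈ 𝒦` -/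
  holder1 : ∀ n ∈ K, HolderOn (Sig W A n) r (κ n) 1 (φ n)
  ho : ∀ k, o k ∈ W k
  /-- `n_k ≥ ⌊−log α_k / log r⌋ + 1` where `α_k = B_k/β` -/
  hn : ∀ k, (⌊-Real.log (Bconst κ r k / β) / Real.log r⌋ + 1 : ℤ) ≤ (nseq k : ℤ)
  /-- `m_k ≥ 1`, `k + m_k ∈ 𝒦` -/
  hm_mem : ∀ k, 1 ≤ mseq k ∧ k + mseq k ∈ K
  /-- `(A_k ⋯ A_{k+m_k−2})_{o_k j} ≥ 1` for all `j ∈ ℐ ∩ 𝒲¹_{k+m_k−1}` -/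
  hm_conn : ∀ k, ∀ j ∈ I, (j : ℕ) ∈ W (k + mseq k - 1) →
    ∃ w : ℕ → ℕ, Adm W A k w (mseq k) ∧ w 0 = o k ∧ w (mseq k - 1) = j
  /-- minimality of `m_k` -/
  hm_min : ∀ k n, (1 ≤ n ∧ k + n ∈ K ∧ ∀ j ∈ I, (j : ℕ) ∈ W (k + n - 1) →
      ∃ w : ℕ → ℕ, Adm W A k w n ∧ w 0 = o k ∧ w (n - 1) = j) → mseq k ≤ n
  /-- the connecting word `u(x)` starts at `o_k`, ends in `ℐ`, and
  `x ∈ T^{m_k}([u(x)]_k)` -/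
  hu : ∀ k, ∀ x ∈ Sig W A (k + mseq k), prepend (u k x) (mseq k) x ∈ Sig W A k ∧
    u k x 0 = o k ∧ u k x (mseq k - 1) ∈ I
  hC_pos : ∀ k, 0 < Cseq k
  /-- `C_k` is a lower bound for `e^{S_{m_k} φ_k (τ_{u(x)} x)}` -/
  hC_le : ∀ k, ∀ x ∈ Sig W A (k + mseq k),
    Cseq k ≤ Real.exp (birkhoff φ k (mseq k) (prepend (u k x) (mseq k) x))

namespace HstarSystem

variable (S : HstarSystem)

/-- `α_k := B_k / β`. -/
noncomputable def alphaC (k : ℕ) : ℝ := Bconst S.κ S.r k / S.β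

/-- the metric `d̄_k(x,y) := min{1, α_k d_r(x,y)}`. -/
noncomputable def dbar (k : ℕ) (x y : Seq) : ℝ := min 1 (S.alphaC k * dr S.r x y)

/-- `s_k := 1 − (1 − r^{n_k} α_k) C_{k+n_k}/B_{k+n_k}`. -/
noncomputable def sconst (k : ℕ) : ℝ :=
  1 - (1 - S.r ^ S.nseq k * S.alphaC k) * S.Cseq (k + S.nseq k) / Bconst S.κ S.r (k + S.nseq k)

/-- `t_k := max{β, s_k}`. -/
noncomputable def tconst (k : ℕ) : ℝ := max S.β (S.sconst k)

/-- `l_k := n_k + m_{k+n_k}`. -/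
def lconst (k : ℕ) : ℕ := S.nseq k + S.mseq (k + S.nseq k)

end HstarSystem


open scoped ENNReal

/-! ### helper lemmas -/

lemma dr_nonneg {r : ℝ} (hr : 0 < r) (x y : Seq) : 0 ≤ dr r x y := by
  unfold dr; split_ifs
  · exact le_rfl
  · positivity

lemma dr_le_one {r : ℝ} (hr : 0 < r) (hr1 : r < 1) (x y : Seq) : dr r x y ≤ 1 := by
  unfold dr; split_ifs
  · exact zero_le_one
  · exact pow_le_one₀ hr.le hr1.le

lemma dr_lt_one_head {r : ℝ} (x y : Seq) (h : dr r x y < 1) : x 0 = y 0 := by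
  by_contra hne
  have hxy : x ≠ y := fun h => hne (by rw [h])
  have h0 : sInf {i | x i ≠ y i} = 0 := Nat.sInf_eq_zero.2 (Or.inl hne)
  unfold dr at h
  rw [if_neg hxy, h0] at h
  simp at h

lemma exists_dr {x y : Seq} (h : x ≠ y) (r : ℝ) :
    ∃ j, dr r x y = r ^ j ∧ x j ≠ y j ∧ agrees x y j := by
  have hne : {i | x i ≠ y i}.Nonempty := by
    by_contra hc
    apply h
    funext i
    by_contra hi
    exact hc ⟨i, hi⟩
  refine ⟨sInf {i | x i ≠ y i}, ?_, Nat.sInf_mem hne, ?_⟩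
  · unfold dr; rw [if_neg h]
  · intro i hi
    by_contra hc
    exact Nat.notMem_of_lt_sInf hi hc

lemma dr_of_agrees {x y : Seq} {j : ℕ} (r : ℝ) (hj : x j ≠ y j) (ha : agrees x y j) :
    dr r x y = r ^ j := by
  have hxy : x ≠ y := fun h => hj (by rw [h])
  obtain ⟨i, h1, h2, h3⟩ := exists_dr hxy r
  have : i = j := by
    rcases lt_trichotomy i j with h | h | h
    · exact absurd (ha i h) h2
    · exact h
    · exact absurd (h3 j h) hj
  rw [h1, this]

lemma cons_inj_right {a : ℕ} {x y : Seq} (h : cons a x = cons a y) : x = y := by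
  funext i
  exact congrFun h (i + 1)

lemma agrees_cons {a : ℕ} {x y : Seq} {j : ℕ} (h : agrees x y j) :
    agrees (cons a x) (cons a y) (j + 1) := by
  intro i hi
  cases i with
  | zero => rfl
  | succ i => exact h i (by omega)

lemma dr_cons (r : ℝ) (a : ℕ) (x y : Seq) : dr r (cons a x) (cons a y) = r * dr r x y := by
  by_cases h : x = y
  · subst h; simp [dr]
  · obtain ⟨j, h1, h2, h3⟩ := exists_dr h r
    rw [h1, dr_of_agrees (j := j + 1) r h2 (agrees_cons h3), pow_succ']

lemma measurable_coord (i : ℕ) : Measurable (fun x : Seq => x i) := measurable_pi_apply i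

lemma measurable_dr {r : ℝ} (hr : 0 < r) (hr1 : r < 1) :
    Measurable (fun p : Seq × Seq => dr r p.1 p.2) := by
  classical
  have : (fun p : Seq × Seq => dr r p.1 p.2)
      = fun p => ⨆ n : ℕ, if p.1 n ≠ p.2 n then r ^ n else 0 := by
    funext p
    by_cases h : p.1 = p.2
    · simp [dr, h]
    · obtain ⟨j, h1, h2, h3⟩ := exists_dr h r
      rw [h1]
      apply le_antisymm
      · have hb : BddAbove (Set.range fun n : ℕ => if p.1 n ≠ p.2 n then r ^ n else 0) := by
          refine ⟨1, ?_⟩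
          rintro _ ⟨n, rfl⟩
          dsimp only
          split_ifs
          · exact pow_le_one₀ hr.le hr1.le
          · exact zero_le_one
        refine le_trans ?_ (le_ciSup hb j)
        rw [if_pos h2]
      · refine ciSup_le fun n => ?_
        split_ifs with hn
        · apply pow_le_pow_of_le_one hr.le hr1.le
          by_contra hlt
          exact hn (h3 n (by omega))
        · positivity
  rw [this]
  refine Measurable.iSup fun n => ?_
  refine Measurable.ite ?_ measurable_const measurable_const
  exact (measurableSet_eq_fun ((measurable_coord n).comp measurable_fst)
    ((measurable_coord n).comp measurable_snd)).compl

lemma measurable_cons (a : ℕ) : Measurable (cons a) := by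
  refine measurable_pi_lambda _ fun i => ?_
  cases i with
  | zero => exact measurable_const
  | succ i => exact measurable_coord i

lemma cons_head_shift (y : Seq) : cons (y 0) (shift y) = y := by
  funext i
  cases i <;> rfl

lemma measurableSet_Sig (W : ℕ → Set ℕ) (A : ℕ → ℕ → ℕ → Prop) (n : ℕ) :
    MeasurableSet (Sig W A n) := by
  have : Sig W A n = (⋂ i, (fun x : Seq => x i) ⁻¹' (W (n + i))) ∩
      ⋂ i, (fun x : Seq => (x i, x (i + 1))) ⁻¹' {q : ℕ × ℕ | A (n + i) q.1 q.2} := by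
    ext x; simp [Sig]
  rw [this]
  refine MeasurableSet.inter (MeasurableSet.iInter fun i => ?_) (MeasurableSet.iInter fun i => ?_)
  · exact measurable_coord i (MeasurableSet.of_discrete)
  · exact ((measurable_coord i).prodMk (measurable_coord (i + 1))) (MeasurableSet.of_discrete)

lemma cons_mem_Sig {W : ℕ → Set ℕ} {A : ℕ → ℕ → ℕ → Prop} {k a : ℕ} {x y : Seq}
    (hx : cons a x ∈ Sig W A k) (hy : y ∈ Sig W A (k + 1)) (h0 : x 0 = y 0) :
    cons a y ∈ Sig W A k := by
  refine ⟨fun i => ?_, fun i => ?_⟩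
  · cases i with
    | zero => exact hx.1 0
    | succ i =>
      have := hy.1 i
      rwa [show k + 1 + i = k + (i + 1) by ring] at this
  · cases i with
    | zero =>
      have := hx.2 0
      change A (k + 0) a (x 0) at this
      change A (k + 0) a (y 0)
      rwa [← h0]
    | succ i =>
      have := hy.2 i
      rwa [show k + 1 + i = k + (i + 1) by ring] at this

lemma shift_mem_Sig {W : ℕ → Set ℕ} {A : ℕ → ℕ → ℕ → Prop} {k : ℕ} {x : Seq}
    (hx : x ∈ Sig W A k) : shift x ∈ Sig W A (k + 1) := by
  refine ⟨fun i => ?_, fun i => ?_⟩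
  · have := hx.1 (i + 1)
    rwa [show k + (i + 1) = k + 1 + i by ring] at this
  · have := hx.2 (i + 1)
    rwa [show k + (i + 1) = k + 1 + i by ring] at this

/-- the weight -/
noncomputable def G (W : ℕ → Set ℕ) (A : ℕ → ℕ → ℕ → Prop) (φ : ℕ → Seq → ℝ)
    (k : ℕ) (y : Seq) : ℝ≥0∞ :=
  ENNReal.ofReal ((Sig W A k).indicator (fun y => Real.exp (φ k y)) y)

lemma G_of_mem {W : ℕ → Set ℕ} {A : ℕ → ℕ → ℕ → Prop} {φ : ℕ → Seq → ℝ} {k : ℕ} {y : Seq}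
    (h : y ∈ Sig W A k) : G W A φ k y = ENNReal.ofReal (Real.exp (φ k y)) := by
  unfold G; rw [Set.indicator_of_mem h]

lemma G_of_not_mem {W : ℕ → Set ℕ} {A : ℕ → ℕ → ℕ → Prop} {φ : ℕ → Seq → ℝ} {k : ℕ} {y : Seq}
    (h : y ∉ Sig W A k) : G W A φ k y = 0 := by
  unfold G; rw [Set.indicator_of_notMem h]; simp

namespace HstarSystem

lemma holder (S : HstarSystem) (n : ℕ) : HolderOn (Sig S.W S.A n) S.r (S.κ n) 2 (S.φ n) := by
  by_cases h : n ∈ S.K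
  · intro k hk
    exact S.holder1 n h k (by omega)
  · exact S.holder2 n h

lemma measurable_G (S : HstarSystem) (k : ℕ) : Measurable (G S.W S.A S.φ k) := by
  classical
  have hc : ContinuousOn (S.φ k) (Sig S.W S.A k) := by
    intro x hx
    rw [ContinuousWithinAt, Metric.tendsto_nhds]
    intro ε hε
    have ht : Tendsto (fun j : ℕ => S.κ k * S.r ^ j) atTop (nhds 0) := by
      simpa using (tendsto_pow_atTop_nhds_zero_of_lt_one S.hr.1.le S.hr.2).const_mul (S.κ k)
    obtain ⟨j, hj, hj2⟩ := ((ht.eventually (gt_mem_nhds hε)).and (eventually_ge_atTop 2)).exists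
    have hU : {y : Seq | agrees y x j} ∈ nhds x := by
      have : {y : Seq | agrees y x j} = ⋂ i ∈ Finset.range j, (fun y : Seq => y i) ⁻¹' {x i} := by
        ext y; simp [agrees]
      rw [this]
      apply (isOpen_biInter_finset fun i _ => ?_).mem_nhds
      · simp
      · exact (isOpen_discrete _).preimage (continuous_apply i)
    filter_upwards [mem_nhdsWithin_of_mem_nhds hU, self_mem_nhdsWithin] with y hy hyS
    rw [Real.dist_eq]
    exact (S.holder k j hj2 y hyS x hx hy).trans_lt hj
  unfold G
  refine ENNReal.measurable_ofReal.comp ?_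
  have := (Real.continuous_exp.comp_continuousOn hc).measurable_piecewise
    (g := fun _ => (0:ℝ)) continuousOn_const (measurableSet_Sig S.W S.A k)
  convert this using 1
  funext y
  by_cases hy : y ∈ Sig S.W S.A k <;> simp [hy]

lemma tsum_G (S : HstarSystem) (k : ℕ) {x : Seq} (hx : x ∈ Sig S.W S.A (k + 1)) :
    ∑' a, G S.W S.A S.φ k (cons a x) = 1 := by
  classical
  have h := S.normalized k x hx
  unfold Ruelle at h
  have hs : Summable fun a : ℕ => if cons a x ∈ Sig S.W S.A k then
      Real.exp (S.φ k (cons a x)) * 1 else 0 := by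
    by_contra hc
    rw [tsum_eq_zero_of_not_summable hc] at h
    exact zero_ne_one h
  have h2 := ENNReal.ofReal_tsum_of_nonneg (fun a => by split_ifs <;> positivity) hs
  rw [h, ENNReal.ofReal_one] at h2
  rw [h2]
  refine tsum_congr fun a => ?_
  split_ifs with hc
  · rw [G_of_mem hc, mul_one]
  · rw [G_of_not_mem hc]; simp

lemma phi_cons (S : HstarSystem) (k a : ℕ) {x y : Seq} (hx : cons a x ∈ Sig S.W S.A k)
    (hy : cons a y ∈ Sig S.W S.A k) (h0 : x 0 = y 0) :
    |S.φ k (cons a x) - S.φ k (cons a y)| ≤ S.κ k * (S.r * dr S.r x y) := by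
  by_cases h : x = y
  · subst h; simp [dr]
  · obtain ⟨j, h1, h2, h3⟩ := exists_dr h S.r
    have hj : j ≠ 0 := by rintro rfl; exact h2 h0
    rw [h1, ← pow_succ']
    exact S.holder k (j + 1) (by omega) _ hx _ hy (agrees_cons h3)

end HstarSystem

namespace HstarSystem

/-- the transfer operator with values in `[0,∞]` -/
noncomputable def LE (S : HstarSystem) (k : ℕ) (f : Seq → ℝ≥0∞) (x : Seq) : ℝ≥0∞ :=
  ∑' a, G S.W S.A S.φ k (cons a x) * f (cons a x)

/-- its iterates -/
noncomputable def LEI (S : HstarSystem) : ℕ → ℕ → (Seq → ℝ≥0∞) → Seq → ℝ≥0∞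
  | _, 0, f => f
  | k, n + 1, f => LEI S (k + 1) n (LE S k f)

lemma measurable_LE (S : HstarSystem) (k : ℕ) {f : Seq → ℝ≥0∞} (hf : Measurable f) :
    Measurable (S.LE k f) := by
  unfold LE
  exact Measurable.tsum fun a =>
    ((S.measurable_G k).comp (measurable_cons a)).mul (hf.comp (measurable_cons a))

lemma measurable_LEI (S : HstarSystem) (n : ℕ) : ∀ (k : ℕ) {f : Seq → ℝ≥0∞},
    Measurable f → Measurable (S.LEI k n f) := by
  induction n with
  | zero => intro k f hf; exact hf
  | succ n ih => intro k f hf; exact ih (k + 1) (S.measurable_LE k hf)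

lemma lintegral_dual (S : HstarSystem) (k : ℕ) (μ : Measure Seq) {f : Seq → ℝ≥0∞}
    (hf : Measurable f) :
    ∫⁻ x, f x ∂(dualRuelle S.W S.A S.φ k μ) = ∫⁻ x, S.LE k f x ∂μ := by
  unfold dualRuelle LE
  have hG : ∀ a, Measurable fun x => G S.W S.A S.φ k (cons a x) :=
    fun a => (S.measurable_G k).comp (measurable_cons a)
  rw [lintegral_sum_measure, lintegral_tsum]
  · refine tsum_congr fun a => ?_
    rw [lintegral_map hf (measurable_cons a)]
    exact lintegral_withDensity_eq_lintegral_mul μ (hG a) (hf.comp (measurable_cons a))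
  · intro a
    exact ((hG a).mul (hf.comp (measurable_cons a))).aemeasurable

lemma lintegral_dualIter (S : HstarSystem) (n : ℕ) : ∀ (k : ℕ) (μ : Measure Seq)
    {f : Seq → ℝ≥0∞} (_ : Measurable f),
    ∫⁻ x, f x ∂(dualRuelleIter S.W S.A S.φ k n μ) = ∫⁻ x, S.LEI k n f x ∂μ := by
  induction n with
  | zero => intro k μ f hf; rfl
  | succ n ih =>
    intro k μ f hf
    rw [dualRuelleIter, S.lintegral_dual k _ hf, ih (k + 1) μ (S.measurable_LE k hf)]
    rfl

lemma iter_apply (S : HstarSystem) (n k : ℕ) (μ : Measure Seq) {s : Set Seq}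
    (hs : MeasurableSet s) :
    dualRuelleIter S.W S.A S.φ k n μ s = ∫⁻ x, S.LEI k n (s.indicator 1) x ∂μ := by
  rw [← S.lintegral_dualIter n k μ (measurable_one.indicator hs), lintegral_indicator_one hs]

lemma iter_add_measure (S : HstarSystem) (n k : ℕ) (μ ν : Measure Seq) :
    dualRuelleIter S.W S.A S.φ k n (μ + ν) =
      dualRuelleIter S.W S.A S.φ k n μ + dualRuelleIter S.W S.A S.φ k n ν := by
  ext s hs
  rw [Measure.add_apply, S.iter_apply n k _ hs, S.iter_apply n k _ hs, S.iter_apply n k _ hs,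
    lintegral_add_measure]

lemma iter_add (S : HstarSystem) (n m : ℕ) : ∀ (k : ℕ) (μ : Measure Seq),
    dualRuelleIter S.W S.A S.φ k (n + m) μ =
      dualRuelleIter S.W S.A S.φ k n (dualRuelleIter S.W S.A S.φ (k + n) m μ) := by
  induction n with
  | zero => intro k μ; simp [dualRuelleIter]
  | succ n ih =>
    intro k μ
    rw [show n + 1 + m = (n + m) + 1 by ring, dualRuelleIter, ih (k + 1) μ, dualRuelleIter,
      show k + 1 + n = k + (n + 1) by ring]

lemma LE_one (S : HstarSystem) (k : ℕ) {x : Seq} (hx : x ∈ Sig S.W S.A (k + 1)) :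
    S.LE k 1 x = 1 := by
  unfold LE
  simpa using S.tsum_G k hx

lemma iter_univ (S : HstarSystem) (n : ℕ) : ∀ (k : ℕ) (μ : Measure Seq)
    (_ : ∀ᵐ x ∂μ, x ∈ Sig S.W S.A (k + n)),
    dualRuelleIter S.W S.A S.φ k n μ Set.univ = μ Set.univ ∧
      ∀ᵐ x ∂(dualRuelleIter S.W S.A S.φ k n μ), x ∈ Sig S.W S.A k := by
  induction n with
  | zero => intro k μ h; exact ⟨rfl, h⟩
  | succ n ih =>
    intro k μ h
    rw [show k + (n + 1) = k + 1 + n by ring] at h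
    obtain ⟨h1, h2⟩ := ih (k + 1) μ h
    rw [dualRuelleIter]
    constructor
    · rw [← h1, ← lintegral_one, ← lintegral_one]
      have := S.lintegral_dual k (dualRuelleIter S.W S.A S.φ (k + 1) n μ)
        (f := 1) measurable_one
      simp only [Pi.one_apply] at this
      rw [this]
      refine lintegral_congr_ae ?_
      filter_upwards [h2] with x hx
      exact S.LE_one k hx
    · have hms := (measurableSet_Sig S.W S.A k).compl
      rw [ae_iff]
      change dualRuelle S.W S.A S.φ k _ (Sig S.W S.A k)ᶜ = 0
      rw [← lintegral_indicator_one hms, S.lintegral_dual k _ (measurable_one.indicator hms)]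
      have : S.LE k ((Sig S.W S.A k)ᶜ.indicator 1) = 0 := by
        funext x
        simp only [LE, Pi.zero_apply, ENNReal.tsum_eq_zero]
        intro a
        by_cases hc : cons a x ∈ Sig S.W S.A k
        · simp [hc]
        · rw [G_of_not_mem hc, zero_mul]
      rw [this]; simp

lemma LEI_lower (S : HstarSystem) (n : ℕ) : ∀ (k : ℕ) (f : Seq → ℝ≥0∞) (y : Seq)
    (_ : y ∈ Sig S.W S.A k),
    ENNReal.ofReal (Real.exp (birkhoff S.φ k n y)) * f y ≤ S.LEI k n f (shift^[n] y) := by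
  induction n with
  | zero => intro k f y hy; simp [birkhoff, LEI]
  | succ n ih =>
    intro k f y hy
    have h1 := ih (k + 1) (S.LE k f) (shift y) (shift_mem_Sig hy)
    rw [Function.iterate_succ_apply]
    refine le_trans ?_ h1
    have h2 : G S.W S.A S.φ k y * f y ≤ S.LE k f (shift y) := by
      unfold LE
      have := ENNReal.le_tsum (f := fun a => G S.W S.A S.φ k (cons a (shift y)) *
        f (cons a (shift y))) (y 0)
      simpa only [cons_head_shift] using this
    refine le_trans ?_ (mul_le_mul_right h2 _)
    rw [G_of_mem hy, ← mul_assoc, ← ENNReal.ofReal_mul (Real.exp_pos _).le, ← Real.exp_add]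
    refine le_of_eq ?_
    congr 3
    unfold birkhoff
    rw [Finset.sum_range_succ']
    simp only [Function.iterate_zero, id, add_zero, Function.iterate_succ_apply]
    congr 1
    refine Finset.sum_congr rfl fun i _ => ?_
    rw [show k + (i + 1) = k + 1 + i by ring]

lemma shift_iterate (n : ℕ) (y : Seq) (i : ℕ) : (shift^[n] y) i = y (i + n) := by
  induction n generalizing y with
  | zero => rfl
  | succ n ih =>
    rw [Function.iterate_succ_apply, ih]
    simp only [shift]
    congr 1

lemma shift_prepend (w : ℕ → ℕ) (n : ℕ) (x : Seq) : shift^[n] (prepend w n x) = x := by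
  funext i
  rw [shift_iterate]
  simp [prepend]

/-- mass of the base cylinder -/
lemma iter_base (S : HstarSystem) (k : ℕ) (μ : Measure Seq)
    (h : ∀ᵐ x ∂μ, x ∈ Sig S.W S.A (k + S.mseq k)) :
    ENNReal.ofReal (S.Cseq k) * μ Set.univ ≤
      dualRuelleIter S.W S.A S.φ k (S.mseq k) μ {x | x 0 = S.o k} := by
  have hs : MeasurableSet {x : Seq | x 0 = S.o k} :=
    measurable_coord 0 (measurableSet_singleton _)
  rw [S.iter_apply _ _ _ hs, ← lintegral_const]
  refine lintegral_mono_ae ?_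
  filter_upwards [h] with x hx
  obtain ⟨h1, h2, -⟩ := S.hu k x hx
  have h3 := S.LEI_lower (S.mseq k) k ({x | x 0 = S.o k}.indicator 1) _ h1
  rw [shift_prepend] at h3
  refine le_trans ?_ h3
  have h4 : prepend (S.u k x) (S.mseq k) x ∈ {x : Seq | x 0 = S.o k} := by
    have := (S.hm_mem k).1
    simp only [Set.mem_ofPred_eq, prepend]
    rw [if_pos (by omega), h2]
  rw [Set.indicator_of_mem h4, Pi.one_apply, mul_one]
  exact ENNReal.ofReal_le_ofReal (S.hC_le k x hx)

end HstarSystem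

lemma logB_succ (κ : ℕ → ℝ) (r : ℝ) (k : ℕ) :
    logB κ r (k + 1) = r * (κ k + logB κ r k) := by
  unfold logB
  have h : ∀ n (f : ℕ → ℝ), ∑ i ∈ Finset.Icc 1 n, f i = ∑ i ∈ Finset.range n, f (i + 1) := by
    intro n f
    rw [Finset.range_eq_Ico, Finset.sum_Ico_add' f 0 n 1]
    rfl
  rw [h, h, Finset.sum_range_succ', mul_add, Finset.mul_sum, add_comm]
  congr 1
  · simp [mul_comm]
  · refine Finset.sum_congr rfl fun i _ => ?_
    rw [show k + 1 - (i + 1 + 1) = k - (i + 1) by omega]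
    ring

namespace HstarSystem

lemma logB_nonneg (S : HstarSystem) (k : ℕ) : 0 ≤ logB S.κ S.r k :=
  Finset.sum_nonneg fun _ _ => mul_nonneg (S.κnonneg _) (pow_nonneg S.hr.1.le _)

/-- the test function -/
noncomputable def H (S : HstarSystem) (k : ℕ) (p : Seq × Seq) : ℝ≥0∞ :=
  ENNReal.ofReal (Real.exp (-(logB S.κ S.r k * dr S.r p.1 p.2)))

/-- the distance with values in `[0,∞]` -/
noncomputable def D (S : HstarSystem) (p : Seq × Seq) : ℝ≥0∞ :=
  ENNReal.ofReal (dr S.r p.1 p.2)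

lemma measurable_D (S : HstarSystem) : Measurable S.D :=
  ENNReal.measurable_ofReal.comp (measurable_dr S.hr.1 S.hr.2)

lemma measurable_H (S : HstarSystem) (k : ℕ) : Measurable (S.H k) :=
  ENNReal.measurable_ofReal.comp (Real.measurable_exp.comp
    (((measurable_dr S.hr.1 S.hr.2).const_mul _).neg))

/-- pairs in the same one-cylinder -/
def good (S : HstarSystem) (k : ℕ) : Set (Seq × Seq) :=
  {p | p.1 ∈ Sig S.W S.A k ∧ p.2 ∈ Sig S.W S.A k ∧ p.1 0 = p.2 0}

lemma measurableSet_good (S : HstarSystem) (k : ℕ) : MeasurableSet (S.good k) := by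
  have h1 : MeasurableSet {p : Seq × Seq | p.1 ∈ Sig S.W S.A k} :=
    measurable_fst (measurableSet_Sig S.W S.A k)
  have h2 : MeasurableSet {p : Seq × Seq | p.2 ∈ Sig S.W S.A k} :=
    measurable_snd (measurableSet_Sig S.W S.A k)
  have h3 : MeasurableSet {p : Seq × Seq | p.1 0 = p.2 0} :=
    measurableSet_eq_fun ((measurable_coord 0).comp measurable_fst)
      ((measurable_coord 0).comp measurable_snd)
  exact h1.inter (h2.inter h3)

/-- diagonal weight -/
noncomputable def g (S : HstarSystem) (k a : ℕ) (p : Seq × Seq) : ℝ≥0∞ :=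
  min (G S.W S.A S.φ k (cons a p.1)) (G S.W S.A S.φ k (cons a p.2))

/-- diagonal map -/
def cc (a : ℕ) (p : Seq × Seq) : Seq × Seq := (cons a p.1, cons a p.2)

lemma measurable_cc (a : ℕ) : Measurable (cc a) :=
  ((measurable_cons a).comp measurable_fst).prodMk ((measurable_cons a).comp measurable_snd)

lemma measurable_g (S : HstarSystem) (k a : ℕ) : Measurable (S.g k a) :=
  (((S.measurable_G k).comp (measurable_cons a)).comp measurable_fst).min
    (((S.measurable_G k).comp (measurable_cons a)).comp measurable_snd)

/-- one-step sub-coupling -/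
noncomputable def lift (S : HstarSystem) (k : ℕ) (M : Measure (Seq × Seq)) :
    Measure (Seq × Seq) :=
  Measure.sum fun a : ℕ => (M.withDensity (S.g k a)).map (cc a)

lemma lintegral_lift (S : HstarSystem) (k : ℕ) (M : Measure (Seq × Seq))
    {f : Seq × Seq → ℝ≥0∞} (hf : Measurable f) :
    ∫⁻ p, f p ∂(S.lift k M) = ∫⁻ p, ∑' a, S.g k a p * f (cc a p) ∂M := by
  unfold lift
  rw [lintegral_sum_measure, lintegral_tsum]
  · refine tsum_congr fun a => ?_
    rw [lintegral_map hf (measurable_cc a)]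
    exact lintegral_withDensity_eq_lintegral_mul M (S.measurable_g k a)
      (hf.comp (measurable_cc a))
  · intro a
    exact ((S.measurable_g k a).mul (hf.comp (measurable_cc a))).aemeasurable

lemma le_of_lintegral {μ ν : Measure Seq}
    (h : ∀ f : Seq → ℝ≥0∞, Measurable f → ∫⁻ x, f x ∂μ ≤ ∫⁻ x, f x ∂ν) : μ ≤ ν := by
  refine Measure.le_iff.2 fun s hs => ?_
  have := h (s.indicator 1) (measurable_one.indicator hs)
  rwa [lintegral_indicator_one hs, lintegral_indicator_one hs] at this

lemma lift_fst (S : HstarSystem) (k : ℕ) {M : Measure (Seq × Seq)} {μ : Measure Seq}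
    (h : M.map Prod.fst ≤ μ) : (S.lift k M).map Prod.fst ≤ dualRuelle S.W S.A S.φ k μ := by
  refine le_of_lintegral fun f hf => ?_
  rw [lintegral_map hf measurable_fst, S.lintegral_lift k M (f := fun p => f (Prod.fst p))
      (hf.comp measurable_fst),
    S.lintegral_dual k μ hf]
  refine le_trans ?_ (lintegral_mono' h le_rfl)
  rw [lintegral_map (S.measurable_LE k hf) measurable_fst]
  refine lintegral_mono fun p => ?_
  exact ENNReal.tsum_le_tsum fun a => mul_le_mul_left (min_le_left _ _) _

lemma lift_snd (S : HstarSystem) (k : ℕ) {M : Measure (Seq × Seq)} {μ : Measure Seq}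
    (h : M.map Prod.snd ≤ μ) : (S.lift k M).map Prod.snd ≤ dualRuelle S.W S.A S.φ k μ := by
  refine le_of_lintegral fun f hf => ?_
  rw [lintegral_map hf measurable_snd, S.lintegral_lift k M (f := fun p => f (Prod.snd p))
      (hf.comp measurable_snd),
    S.lintegral_dual k μ hf]
  refine le_trans ?_ (lintegral_mono' h le_rfl)
  rw [lintegral_map (S.measurable_LE k hf) measurable_snd]
  refine lintegral_mono fun p => ?_
  exact ENNReal.tsum_le_tsum fun a => mul_le_mul_left (min_le_right _ _) _

lemma lift_ae (S : HstarSystem) (k : ℕ) {M : Measure (Seq × Seq)} {s : Set (Seq × Seq)}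
    (hs : MeasurableSet s) (h : ∀ᵐ p ∂M, ∀ a, S.g k a p ≠ 0 → cc a p ∈ s) :
    ∀ᵐ p ∂(S.lift k M), p ∈ s := by
  rw [ae_iff]
  change S.lift k M sᶜ = 0
  rw [← lintegral_indicator_one hs.compl, S.lintegral_lift k M (measurable_one.indicator hs.compl)]
  rw [lintegral_eq_zero_of_ae_eq_zero]
  filter_upwards [h] with p hp
  simp only [Pi.zero_apply, ENNReal.tsum_eq_zero]
  intro a
  by_cases h0 : S.g k a p = 0
  · rw [h0, zero_mul]
  · have := hp a h0
    simp [this]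

lemma lift_good (S : HstarSystem) (k : ℕ) (M : Measure (Seq × Seq)) :
    ∀ᵐ p ∂(S.lift k M), p ∈ S.good k := by
  refine S.lift_ae k (S.measurableSet_good k) (Eventually.of_forall fun p a h => ?_)
  refine ⟨?_, ?_, rfl⟩
  · by_contra hc
    apply h
    change min (G S.W S.A S.φ k (cc a p).1) _ = 0
    rw [G_of_not_mem hc]; simp
  · by_contra hc
    apply h
    change min _ (G S.W S.A S.φ k (cc a p).2) = 0
    rw [G_of_not_mem hc]; simp

lemma lift_dist (S : HstarSystem) (k : ℕ) {M : Measure (Seq × Seq)} {δ : ℝ}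
    (h : ∀ᵐ p ∂M, dr S.r p.1 p.2 ≤ δ) :
    ∀ᵐ p ∂(S.lift k M), dr S.r p.1 p.2 ≤ S.r * δ := by
  refine S.lift_ae k (s := {p | dr S.r p.1 p.2 ≤ S.r * δ})
    (measurableSet_le (measurable_dr S.hr.1 S.hr.2) measurable_const) ?_
  filter_upwards [h] with p hp a _
  change dr S.r (cons a p.1) (cons a p.2) ≤ _
  rw [dr_cons]
  exact mul_le_mul_of_nonneg_left hp S.hr.1.le

lemma lift_D (S : HstarSystem) (k : ℕ) {M : Measure (Seq × Seq)}
    (h : ∀ᵐ p ∂M, p ∈ S.good (k + 1)) :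
    ∫⁻ p, S.D p ∂(S.lift k M) ≤ ENNReal.ofReal S.r * ∫⁻ p, S.D p ∂M := by
  rw [S.lintegral_lift k M S.measurable_D, ← lintegral_const_mul _ S.measurable_D]
  refine lintegral_mono_ae ?_
  filter_upwards [h] with p hp
  have : ∀ a, S.D (cc a p) = ENNReal.ofReal S.r * S.D p := by
    intro a
    unfold D cc
    rw [dr_cons, ENNReal.ofReal_mul S.hr.1.le]
  simp only [this]
  rw [ENNReal.tsum_mul_right]
  calc _ ≤ 1 * (ENNReal.ofReal S.r * S.D p) := by
        refine mul_le_mul_left ?_ _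
        rw [← S.tsum_G k hp.1]
        exact ENNReal.tsum_le_tsum fun a => min_le_left _ _
    _ = _ := one_mul _

lemma lift_H (S : HstarSystem) (k : ℕ) {M : Measure (Seq × Seq)}
    (h : ∀ᵐ p ∂M, p ∈ S.good (k + 1)) :
    ∫⁻ p, S.H (k + 1) p ∂M ≤ ∫⁻ p, S.H k p ∂(S.lift k M) := by
  rw [S.lintegral_lift k M (S.measurable_H k)]
  refine lintegral_mono_ae ?_
  filter_upwards [h] with p hp
  rw [← one_mul (S.H (k + 1) p), ← S.tsum_G k hp.1, ← ENNReal.tsum_mul_right]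
  refine ENNReal.tsum_le_tsum fun a => ?_
  set d := dr S.r p.1 p.2 with hd
  have hd0 : 0 ≤ d := dr_nonneg S.hr.1 _ _
  have hH : S.H (k + 1) p = ENNReal.ofReal (Real.exp (-(S.κ k * (S.r * d)))) * S.H k (cc a p) := by
    unfold H cc
    rw [← ENNReal.ofReal_mul (Real.exp_pos _).le, ← Real.exp_add, dr_cons, logB_succ]
    congr 2
    rw [← hd]
    ring
  rw [hH, ← mul_assoc]
  refine mul_le_mul_left ?_ _
  by_cases hx : cons a p.1 ∈ Sig S.W S.A k
  · have hy := cons_mem_Sig hx hp.2.1 hp.2.2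
    have hk : 0 ≤ S.κ k * (S.r * d) := mul_nonneg (S.κnonneg k) (mul_nonneg S.hr.1.le hd0)
    have hφ := abs_le.1 (S.phi_cons k a hx hy hp.2.2)
    unfold g
    rw [G_of_mem hx, G_of_mem hy, ← ENNReal.ofReal_mul (Real.exp_pos _).le, ← Real.exp_add]
    refine le_min ?_ ?_
    · apply ENNReal.ofReal_le_ofReal
      apply Real.exp_le_exp.2
      linarith
    · apply ENNReal.ofReal_le_ofReal
      apply Real.exp_le_exp.2
      linarith [hφ.2]
  · rw [G_of_not_mem hx]; simp

lemma liftIter (S : HstarSystem) (n : ℕ) : ∀ (k : ℕ) (M : Measure (Seq × Seq)) (μ ν : Measure Seq)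
    (_ : ∀ᵐ p ∂M, p ∈ S.good (k + n)) (_ : M.map Prod.fst ≤ μ) (_ : M.map Prod.snd ≤ ν),
    ∃ M' : Measure (Seq × Seq), (∀ᵐ p ∂M', p ∈ S.good k) ∧
      M'.map Prod.fst ≤ dualRuelleIter S.W S.A S.φ k n μ ∧
      M'.map Prod.snd ≤ dualRuelleIter S.W S.A S.φ k n ν ∧
      (∀ᵐ p ∂M', dr S.r p.1 p.2 ≤ S.r ^ n) ∧
      ∫⁻ p, S.D p ∂M' ≤ ENNReal.ofReal S.r ^ n * ∫⁻ p, S.D p ∂M ∧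
      ∫⁻ p, S.H (k + n) p ∂M ≤ ∫⁻ p, S.H k p ∂M' := by
  induction n with
  | zero =>
    intro k M μ ν h1 h2 h3
    refine ⟨M, h1, h2, h3, Eventually.of_forall fun p => ?_, ?_, le_rfl⟩
    · rw [pow_zero]; exact dr_le_one S.hr.1 S.hr.2 _ _
    · simp
  | succ n ih =>
    intro k M μ ν h1 h2 h3
    rw [show k + (n + 1) = k + 1 + n by ring] at h1 ⊢
    obtain ⟨M', a1, a2, a3, a4, a5, a6⟩ := ih (k + 1) M μ ν h1 h2 h3
    refine ⟨S.lift k M', S.lift_good k M', S.lift_fst k a2, S.lift_snd k a3, ?_, ?_, ?_⟩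
    · rw [pow_succ']; exact S.lift_dist k a4
    · rw [pow_succ', mul_assoc]
      exact (S.lift_D k a1).trans (mul_le_mul_right a5 _)
    · exact a6.trans (S.lift_H k a1)

lemma H_le_one (S : HstarSystem) (k : ℕ) (p : Seq × Seq) : S.H k p ≤ 1 := by
  unfold H
  rw [← ENNReal.ofReal_one]
  apply ENNReal.ofReal_le_ofReal
  rw [Real.exp_le_one_iff]
  have := mul_nonneg (S.logB_nonneg k) (dr_nonneg S.hr.1 p.1 p.2)
  linarith

end HstarSystem

lemma wass_le {d : Seq → Seq → ℝ} (hd : Measurable fun p : Seq × Seq => d p.1 p.2)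
    (hd0 : ∀ x y, 0 ≤ d x y) (hd1 : ∀ x y, d x y ≤ 1) {μ ν : Measure Seq}
    (hμ : μ Set.univ = 1) (hν : ν Set.univ = 1) {M : Measure (Seq × Seq)}
    (h1 : M.map Prod.fst ≤ μ) (h2 : M.map Prod.snd ≤ ν) :
    Wass d μ ν ≤ (∫⁻ p, ENNReal.ofReal (d p.1 p.2) ∂M).toReal + 1 - (M Set.univ).toReal := by
  have hMu : M Set.univ ≤ 1 := by
    have := h1 Set.univ
    rwa [Measure.map_apply measurable_fst MeasurableSet.univ, Set.preimage_univ, hμ] at this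
  have : IsFiniteMeasure M := ⟨hMu.trans_lt ENNReal.one_lt_top⟩
  have : IsFiniteMeasure μ := ⟨by rw [hμ]; exact ENNReal.one_lt_top⟩
  have : IsFiniteMeasure ν := ⟨by rw [hν]; exact ENNReal.one_lt_top⟩
  have e1 := Measure.sub_add_cancel_of_le h1
  have e2 := Measure.sub_add_cancel_of_le h2
  set R1 := μ - M.map Prod.fst
  set R2 := ν - M.map Prod.snd
  set c := 1 - M Set.univ with hc
  have hMne : M Set.univ ≠ ∞ := measure_ne_top _ _
  have hR1 : R1 Set.univ = c := by
    have := congrArg (fun m : Measure Seq => m Set.univ) e1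
    simp only [Measure.add_apply] at this
    rw [Measure.map_apply measurable_fst MeasurableSet.univ, Set.preimage_univ, hμ] at this
    rw [hc, ← this, ENNReal.add_sub_cancel_right hMne]
  have hR2 : R2 Set.univ = c := by
    have := congrArg (fun m : Measure Seq => m Set.univ) e2
    simp only [Measure.add_apply] at this
    rw [Measure.map_apply measurable_snd MeasurableSet.univ, Set.preimage_univ, hν] at this
    rw [hc, ← this, ENNReal.add_sub_cancel_right hMne]
  have hcne : c ≠ ∞ := ENNReal.sub_ne_top ENNReal.one_ne_top
  have key : ∀ R : Measure Seq, R Set.univ = c → (c⁻¹ * c) • R = R := by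
    intro R hR
    by_cases h0 : c = 0
    · rw [h0] at hR
      rw [Measure.measure_univ_eq_zero.1 hR, smul_zero]
    · rw [ENNReal.inv_mul_cancel h0 hcne, one_smul]
  set Γ := M + c⁻¹ • R1.prod R2 with hΓ
  have g1 : Γ.map Prod.fst = μ := by
    rw [hΓ, Measure.map_add _ _ measurable_fst, Measure.map_smul, Measure.map_fst_prod, hR2,
      smul_smul, key R1 hR1, add_comm, e1]
  have g2 : Γ.map Prod.snd = ν := by
    rw [hΓ, Measure.map_add _ _ measurable_snd, Measure.map_smul, Measure.map_snd_prod, hR1,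
      smul_smul, key R2 hR2, add_comm, e2]
  have hW : Wass d μ ν ≤ ∫ p, d p.1 p.2 ∂Γ := by
    refine csInf_le ⟨0, ?_⟩ ⟨Γ, g1, g2, rfl⟩
    rintro _ ⟨m, -, -, rfl⟩
    exact integral_nonneg fun p => hd0 _ _
  refine hW.trans ?_
  rw [integral_eq_lintegral_of_nonneg_ae (Eventually.of_forall fun p => hd0 _ _)
    hd.aestronglyMeasurable]
  have hle : ∫⁻ p, ENNReal.ofReal (d p.1 p.2) ∂Γ ≤
      ∫⁻ p, ENNReal.ofReal (d p.1 p.2) ∂M + c := by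
    rw [hΓ, lintegral_add_measure]
    gcongr
    calc ∫⁻ p, ENNReal.ofReal (d p.1 p.2) ∂(c⁻¹ • R1.prod R2)
        ≤ ∫⁻ _, 1 ∂(c⁻¹ • R1.prod R2) := lintegral_mono fun p => by
          rw [← ENNReal.ofReal_one]; exact ENNReal.ofReal_le_ofReal (hd1 _ _)
      _ = (c⁻¹ * c) * c := by
          rw [lintegral_one, Measure.smul_apply, ← Set.univ_prod_univ, Measure.prod_prod, hR1, hR2,
            smul_eq_mul, mul_assoc]
      _ ≤ 1 * c := mul_le_mul_left (ENNReal.inv_mul_le_one _) _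
      _ = c := one_mul c
  have hfin : ∫⁻ p, ENNReal.ofReal (d p.1 p.2) ∂M ≠ ∞ := by
    refine ne_top_of_le_ne_top hMne ?_
    rw [← lintegral_one]
    refine lintegral_mono fun p => ?_
    rw [← ENNReal.ofReal_one]; exact ENNReal.ofReal_le_ofReal (hd1 _ _)
  have := ENNReal.toReal_mono (ENNReal.add_ne_top.2 ⟨hfin, hcne⟩) hle
  rw [ENNReal.toReal_add hfin hcne, hc, ENNReal.toReal_sub_of_le hMu ENNReal.one_ne_top,
    ENNReal.toReal_one] at this
  linarith

lemma subcouple {P1 P2 : Measure Seq} [IsFiniteMeasure P1] [IsFiniteMeasure P2] {t : ℝ≥0∞}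
    (h1 : t ≤ P1 Set.univ) (h2 : t ≤ P2 Set.univ) :
    ∃ N : Measure (Seq × Seq), N.map Prod.fst ≤ P1 ∧ N.map Prod.snd ≤ P2 ∧ N Set.univ = t := by
  by_cases ht : t = 0
  · exact ⟨0, by simp [Measure.zero_le], by simp [Measure.zero_le], by simp [ht]⟩
  have z1 : P1 Set.univ ≠ 0 := fun h => ht (by simpa [h] using h1)
  have z2 : P2 Set.univ ≠ 0 := fun h => ht (by simpa [h] using h2)
  have f1 : P1 Set.univ ≠ ∞ := measure_ne_top _ _
  have f2 : P2 Set.univ ≠ ∞ := measure_ne_top _ _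
  have sm : ∀ (P : Measure Seq) (a : ℝ≥0∞), a ≤ 1 → a • P ≤ P := by
    intro P a ha
    refine Measure.le_iff.2 fun s _ => ?_
    rw [Measure.smul_apply, smul_eq_mul]
    exact mul_le_of_le_one_left zero_le ha
  refine ⟨(t * (P1 Set.univ)⁻¹ * (P2 Set.univ)⁻¹) • P1.prod P2, ?_, ?_, ?_⟩
  · rw [Measure.map_smul, Measure.map_fst_prod, smul_smul, mul_assoc,
      ENNReal.inv_mul_cancel z2 f2, mul_one]
    exact sm _ _ (by rw [← div_eq_mul_inv]; exact ENNReal.div_le_of_le_mul (by simpa using h1))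
  · rw [Measure.map_smul, Measure.map_snd_prod, smul_smul, mul_right_comm, mul_assoc t,
      ENNReal.inv_mul_cancel z1 f1, mul_one]
    exact sm _ _ (by rw [← div_eq_mul_inv]; exact ENNReal.div_le_of_le_mul (by simpa using h2))
  · rw [Measure.smul_apply, ← Set.univ_prod_univ, Measure.prod_prod, smul_eq_mul]
    calc _ = t * ((P1 Set.univ)⁻¹ * P1 Set.univ) * ((P2 Set.univ)⁻¹ * P2 Set.univ) := by ring
      _ = t := by rw [ENNReal.inv_mul_cancel z1 f1, ENNReal.inv_mul_cancel z2 f2]; simp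

namespace HstarSystem

lemma Bpos (S : HstarSystem) (k : ℕ) : 0 < Bconst S.κ S.r k := Real.exp_pos _

lemma alpha_pos (S : HstarSystem) (k : ℕ) : 0 < S.alphaC k := div_pos (S.Bpos k) S.hβ.1

lemma one_le_alpha (S : HstarSystem) (k : ℕ) : 1 ≤ S.alphaC k := by
  unfold alphaC
  rw [one_le_div S.hβ.1]
  exact S.hβ.2.le.trans (Real.one_le_exp (S.logB_nonneg k))

lemma rn_alpha (S : HstarSystem) (k : ℕ) : S.alphaC k * S.r ^ S.nseq k < 1 := by
  have h := S.hn k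
  have hlr : Real.log S.r < 0 := Real.log_neg S.hr.1 S.hr.2
  have h1 : -Real.log (S.alphaC k) / Real.log S.r < (S.nseq k : ℝ) := by
    refine (Int.lt_floor_add_one _).trans_le ?_
    exact_mod_cast h
  rw [div_lt_iff_of_neg hlr] at h1
  have hp : 0 < S.alphaC k * S.r ^ S.nseq k := mul_pos (S.alpha_pos k) (pow_pos S.hr.1 _)
  rw [← Real.log_neg_iff hp, Real.log_mul (S.alpha_pos k).ne' (pow_pos S.hr.1 _).ne', Real.log_pow]
  linarith

lemma dbar_nonneg (S : HstarSystem) (k : ℕ) (x y : Seq) : 0 ≤ S.dbar k x y :=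
  le_min zero_le_one (mul_nonneg (S.alpha_pos k).le (dr_nonneg S.hr.1 _ _))

lemma dbar_le_one (S : HstarSystem) (k : ℕ) (x y : Seq) : S.dbar k x y ≤ 1 := min_le_left _ _

lemma measurable_dbar (S : HstarSystem) (k : ℕ) :
    Measurable fun p : Seq × Seq => S.dbar k p.1 p.2 :=
  measurable_const.min ((measurable_dr S.hr.1 S.hr.2).const_mul _)

lemma dbar_le_D (S : HstarSystem) (k : ℕ) (p : Seq × Seq) :
    ENNReal.ofReal (S.dbar k p.1 p.2) ≤ ENNReal.ofReal (S.alphaC k) * S.D p := by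
  unfold D
  rw [← ENNReal.ofReal_mul (S.alpha_pos k).le]
  exact ENNReal.ofReal_le_ofReal (min_le_right _ _)

/-- the part where the points are close -/
lemma close_part (S : HstarSystem) (k l : ℕ) (M : Measure (Seq × Seq))
    (hg : ∀ᵐ p ∂M, p ∈ S.good (k + l)) :
    ∃ M' : Measure (Seq × Seq),
      M'.map Prod.fst ≤ dualRuelleIter S.W S.A S.φ k l (M.map Prod.fst) ∧
      M'.map Prod.snd ≤ dualRuelleIter S.W S.A S.φ k l (M.map Prod.snd) ∧
      ∫⁻ p, ENNReal.ofReal (S.dbar k p.1 p.2) ∂M' ≤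
        ENNReal.ofReal (S.alphaC k * S.r ^ l) * ∫⁻ p, S.D p ∂M ∧
      M Set.univ ≤ M' Set.univ + ENNReal.ofReal (logB S.κ S.r (k + l)) * ∫⁻ p, S.D p ∂M := by
  obtain ⟨M', -, a2, a3, -, a5, a6⟩ := S.liftIter l k M _ _ hg le_rfl le_rfl
  refine ⟨M', a2, a3, ?_, ?_⟩
  · calc _ ≤ ∫⁻ p, ENNReal.ofReal (S.alphaC k) * S.D p ∂M' := lintegral_mono (S.dbar_le_D k)
      _ = ENNReal.ofReal (S.alphaC k) * ∫⁻ p, S.D p ∂M' := lintegral_const_mul _ S.measurable_D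
      _ ≤ ENNReal.ofReal (S.alphaC k) * (ENNReal.ofReal S.r ^ l * ∫⁻ p, S.D p ∂M) :=
        mul_le_mul_right a5 _
      _ = _ := by
        rw [ENNReal.ofReal_mul (S.alpha_pos k).le, ENNReal.ofReal_pow S.hr.1.le, mul_assoc]
  · have b1 : ∫⁻ p, S.H k p ∂M' ≤ M' Set.univ := by
      rw [← lintegral_one]
      exact lintegral_mono (S.H_le_one k)
    refine le_trans ?_ (add_le_add_left (a6.trans b1) _)
    rw [← lintegral_const_mul _ S.measurable_D, ← lintegral_add_left (S.measurable_H _),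
      ← lintegral_one]
    refine lintegral_mono fun p => ?_
    unfold H D
    have hL := S.logB_nonneg (k + l)
    have hD := dr_nonneg S.hr.1 p.1 p.2
    rw [← ENNReal.ofReal_mul hL, ← ENNReal.ofReal_add (Real.exp_pos _).le (mul_nonneg hL hD),
      ← ENNReal.ofReal_one]
    apply ENNReal.ofReal_le_ofReal
    have := Real.add_one_le_exp (-(logB S.κ S.r (k + l) * dr S.r p.1 p.2))
    linarith

/-- the part where the points are far apart -/
lemma far_part (S : HstarSystem) (k n : ℕ) (μ ν : Measure Seq) [IsFiniteMeasure μ]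
    [IsFiniteMeasure ν] (hμν : μ Set.univ = ν Set.univ)
    (hμ : ∀ᵐ x ∂μ, x ∈ Sig S.W S.A (k + n + S.mseq (k + n)))
    (hν : ∀ᵐ x ∂ν, x ∈ Sig S.W S.A (k + n + S.mseq (k + n))) :
    ∃ M' : Measure (Seq × Seq),
      M'.map Prod.fst ≤ dualRuelleIter S.W S.A S.φ k (n + S.mseq (k + n)) μ ∧
      M'.map Prod.snd ≤ dualRuelleIter S.W S.A S.φ k (n + S.mseq (k + n)) ν ∧
      ∫⁻ p, ENNReal.ofReal (S.dbar k p.1 p.2) ∂M' ≤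
        ENNReal.ofReal (S.alphaC k * S.r ^ n) * M' Set.univ ∧
      ENNReal.ofReal (S.Cseq (k + n) / Bconst S.κ S.r (k + n)) * μ Set.univ ≤ M' Set.univ := by
  set j := k + n with hj
  set O := {x : Seq | x 0 = S.o j} with hO
  have hOm : MeasurableSet O := measurable_coord 0 (measurableSet_singleton _)
  obtain ⟨u1, v1⟩ := S.iter_univ (S.mseq j) j μ hμ
  obtain ⟨u2, v2⟩ := S.iter_univ (S.mseq j) j ν hν
  have w1 := S.iter_base j μ hμ
  have w2 := S.iter_base j ν hν
  set Q1 := dualRuelleIter S.W S.A S.φ j (S.mseq j) μ with hQ1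
  set Q2 := dualRuelleIter S.W S.A S.φ j (S.mseq j) ν with hQ2
  have : IsFiniteMeasure Q1 := ⟨by rw [u1]; exact measure_lt_top _ _⟩
  have : IsFiniteMeasure Q2 := ⟨by rw [u2]; exact measure_lt_top _ _⟩
  obtain ⟨N, n1, n2, n3⟩ := subcouple (P1 := Q1.restrict O) (P2 := Q2.restrict O)
    (t := ENNReal.ofReal (S.Cseq j) * μ Set.univ)
    (by rw [Measure.restrict_apply_univ]; exact w1)
    (by rw [Measure.restrict_apply_univ, hμν]; exact w2)
  have g1 : ∀ᵐ x ∂(Q1.restrict O), x ∈ Sig S.W S.A j ∧ x ∈ O :=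
    (ae_restrict_of_ae v1).and (ae_restrict_mem hOm)
  have g2 : ∀ᵐ x ∂(Q2.restrict O), x ∈ Sig S.W S.A j ∧ x ∈ O :=
    (ae_restrict_of_ae v2).and (ae_restrict_mem hOm)
  have g1' := ae_of_ae_map measurable_fst.aemeasurable (ae_mono n1 g1)
  have g2' := ae_of_ae_map measurable_snd.aemeasurable (ae_mono n2 g2)
  have hg : ∀ᵐ p ∂N, p ∈ S.good (k + n) := by
    filter_upwards [g1', g2'] with p h1 h2
    refine ⟨h1.1, h2.1, ?_⟩
    have e1 : p.1 0 = S.o j := h1.2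
    have e2 : p.2 0 = S.o j := h2.2
    rw [e1, e2]
  obtain ⟨M', -, a2, a3, a4, -, a6⟩ := S.liftIter n k N Q1 Q2 hg
    (n1.trans Measure.restrict_le_self) (n2.trans Measure.restrict_le_self)
  refine ⟨M', ?_, ?_, ?_, ?_⟩
  · rw [S.iter_add]; exact a2
  · rw [S.iter_add]; exact a3
  · rw [← lintegral_const]
    refine lintegral_mono_ae ?_
    filter_upwards [a4] with p hp
    refine ENNReal.ofReal_le_ofReal ((min_le_right _ _).trans ?_)
    exact mul_le_mul_of_nonneg_left hp (S.alpha_pos k).le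
  · have b1 : ∫⁻ p, S.H k p ∂M' ≤ M' Set.univ := by
      rw [← lintegral_one]
      exact lintegral_mono (S.H_le_one k)
    refine le_trans ?_ (a6.trans b1)
    rw [div_eq_inv_mul, ENNReal.ofReal_mul (inv_nonneg.2 (S.Bpos j).le), mul_assoc, ← n3,
      ← lintegral_const]
    refine lintegral_mono fun p => ?_
    unfold H Bconst
    rw [← Real.exp_neg]
    apply ENNReal.ofReal_le_ofReal
    apply Real.exp_le_exp.2
    have := mul_le_mul_of_nonneg_left (dr_le_one S.hr.1 S.hr.2 p.1 p.2) (S.logB_nonneg j)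
    rw [← hj]
    linarith

lemma contraction_coupling (S : HstarSystem) (k : ℕ) (μ ν : Measure Seq)
    (hμp : IsProbabilityMeasure μ) (hμs : μ (Sig S.W S.A (k + S.lconst k)) = 1)
    (hνp : IsProbabilityMeasure ν) (hνs : ν (Sig S.W S.A (k + S.lconst k)) = 1)
    (m : Measure (Seq × Seq)) (hm1 : m.map Prod.fst = μ) (hm2 : m.map Prod.snd = ν) :
    Wass (S.dbar k) (dualRuelleIter S.W S.A S.φ k (S.lconst k) μ)
          (dualRuelleIter S.W S.A S.φ k (S.lconst k) ν) ≤
        S.tconst k * ∫ p, S.dbar (k + S.lconst k) p.1 p.2 ∂m := by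
  set l := S.lconst k with hl
  set n := S.nseq k with hn
  have hln : l = n + S.mseq (k + n) := rfl
  have aeμ : ∀ᵐ x ∂μ, x ∈ Sig S.W S.A (k + l) :=
    (prob_compl_eq_zero_iff (measurableSet_Sig _ _ _)).2 hμs
  have aeν : ∀ᵐ x ∂ν, x ∈ Sig S.W S.A (k + l) :=
    (prob_compl_eq_zero_iff (measurableSet_Sig _ _ _)).2 hνs
  have hmu : m Set.univ = 1 := by
    have : (m.map Prod.fst) Set.univ = 1 := by rw [hm1]; exact measure_univ
    rwa [Measure.map_apply measurable_fst MeasurableSet.univ, Set.preimage_univ] at this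
  have : IsProbabilityMeasure m := ⟨hmu⟩
  have ae1 : ∀ᵐ p ∂m, p.1 ∈ Sig S.W S.A (k + l) :=
    ae_of_ae_map measurable_fst.aemeasurable (by rw [hm1]; exact aeμ)
  have ae2 : ∀ᵐ p ∂m, p.2 ∈ Sig S.W S.A (k + l) :=
    ae_of_ae_map measurable_snd.aemeasurable (by rw [hm2]; exact aeν)
  set E := {p : Seq × Seq | S.dbar (k + l) p.1 p.2 < 1} with hE
  have hEm : MeasurableSet E := measurableSet_lt (S.measurable_dbar _) measurable_const
  have hEd : ∀ p ∈ E, S.alphaC (k + l) * dr S.r p.1 p.2 < 1 := by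
    intro p hp
    rcases min_lt_iff.1 (show min 1 (S.alphaC (k + l) * dr S.r p.1 p.2) < 1 from hp) with h | h
    · exact absurd h (lt_irrefl _)
    · exact h
  set ME := m.restrict E with hME
  set MA := m.restrict Eᶜ with hMA
  have hgE : ∀ᵐ p ∂ME, p ∈ S.good (k + l) := by
    filter_upwards [ae_restrict_of_ae ae1, ae_restrict_of_ae ae2, ae_restrict_mem hEm]
      with p h1 h2 h3
    refine ⟨h1, h2, dr_lt_one_head (r := S.r) _ _ ?_⟩
    have h4 := hEd p h3
    have := mul_le_mul_of_nonneg_right (S.one_le_alpha (k + l)) (dr_nonneg S.hr.1 p.1 p.2)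
    linarith
  obtain ⟨M1, p1, p2, p3, p4⟩ := S.close_part k l ME hgE
  have hA1 : MA.map Prod.fst Set.univ = MA Set.univ := by
    rw [Measure.map_apply measurable_fst MeasurableSet.univ, Set.preimage_univ]
  have hA2 : MA.map Prod.snd Set.univ = MA Set.univ := by
    rw [Measure.map_apply measurable_snd MeasurableSet.univ, Set.preimage_univ]
  have hidx : k + n + S.mseq (k + n) = k + l := by rw [hln]; ring
  have hfst : ME.map Prod.fst + MA.map Prod.fst = μ := by
    rw [← Measure.map_add _ _ measurable_fst, Measure.restrict_add_restrict_compl hEm, hm1]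
  have hsnd : ME.map Prod.snd + MA.map Prod.snd = ν := by
    rw [← Measure.map_add _ _ measurable_snd, Measure.restrict_add_restrict_compl hEm, hm2]
  obtain ⟨M2, q1, q2, q3, q4⟩ := S.far_part k n (MA.map Prod.fst) (MA.map Prod.snd)
    (by rw [hA1, hA2])
    (by rw [hidx]; exact ae_mono (by rw [← hfst]; exact Measure.le_add_left le_rfl) aeμ)
    (by rw [hidx]; exact ae_mono (by rw [← hsnd]; exact Measure.le_add_left le_rfl) aeν)
  rw [← hln] at q1 q2
  rw [hA1] at q4
  have hμ' := (S.iter_univ l k μ aeμ).1.trans measure_univ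
  have hν' := (S.iter_univ l k ν aeν).1.trans measure_univ
  have r1 : (M1 + M2).map Prod.fst ≤ dualRuelleIter S.W S.A S.φ k l μ := by
    rw [Measure.map_add _ _ measurable_fst, ← hfst, S.iter_add_measure]
    exact add_le_add p1 q1
  have r2 : (M1 + M2).map Prod.snd ≤ dualRuelleIter S.W S.A S.φ k l ν := by
    rw [Measure.map_add _ _ measurable_snd, ← hsnd, S.iter_add_measure]
    exact add_le_add p2 q2
  have hW := wass_le (S.measurable_dbar k) (S.dbar_nonneg k) (S.dbar_le_one k) hμ' hν' r1 r2
  refine hW.trans ?_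
  -- finiteness
  have hMu : (M1 + M2) Set.univ ≤ 1 := by
    have := r1 Set.univ
    rwa [Measure.map_apply measurable_fst MeasurableSet.univ, Set.preimage_univ, hμ'] at this
  rw [Measure.add_apply] at hMu
  have f1 : M1 Set.univ ≠ ∞ :=
    ne_top_of_le_ne_top ENNReal.one_ne_top (le_self_add.trans hMu)
  have f2 : M2 Set.univ ≠ ∞ :=
    ne_top_of_le_ne_top ENNReal.one_ne_top (le_add_self.trans hMu)
  have fE : ME Set.univ ≠ ∞ := measure_ne_top _ _
  have fA : MA Set.univ ≠ ∞ := measure_ne_top _ _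
  have fD : ∫⁻ p, S.D p ∂ME ≠ ∞ := by
    refine ne_top_of_le_ne_top fE ?_
    rw [← lintegral_one]
    refine lintegral_mono fun p => ?_
    rw [← ENNReal.ofReal_one]
    exact ENNReal.ofReal_le_ofReal (dr_le_one S.hr.1 S.hr.2 _ _)
  have fc1 := ne_top_of_le_ne_top (ENNReal.mul_ne_top ENNReal.ofReal_ne_top fD) p3
  have fc2 := ne_top_of_le_ne_top (ENNReal.mul_ne_top ENNReal.ofReal_ne_top f2) q3
  -- the right-hand side
  have hR : ∫ p, S.dbar (k + l) p.1 p.2 ∂m =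
      S.alphaC (k + l) * (∫⁻ p, S.D p ∂ME).toReal + (MA Set.univ).toReal := by
    rw [integral_eq_lintegral_of_nonneg_ae (Eventually.of_forall fun p => S.dbar_nonneg _ _ _)
      (S.measurable_dbar _).aestronglyMeasurable,
      ← lintegral_add_compl _ hEm]
    have i1 : ∫⁻ p in E, ENNReal.ofReal (S.dbar (k + l) p.1 p.2) ∂m =
        ENNReal.ofReal (S.alphaC (k + l)) * ∫⁻ p, S.D p ∂ME := by
      rw [← lintegral_const_mul _ S.measurable_D]
      refine setLIntegral_congr_fun hEm fun p hp => ?_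
      have := hEd p hp
      unfold D dbar
      rw [← ENNReal.ofReal_mul (S.alpha_pos _).le, min_eq_right this.le]
    have i2 : ∫⁻ p in Eᶜ, ENNReal.ofReal (S.dbar (k + l) p.1 p.2) ∂m = MA Set.univ := by
      rw [← lintegral_one]
      refine setLIntegral_congr_fun hEm.compl fun p hp => ?_
      have h1 : 1 ≤ S.dbar (k + l) p.1 p.2 := not_lt.1 hp
      have : S.dbar (k + l) p.1 p.2 = 1 := le_antisymm (S.dbar_le_one _ _ _) h1
      simp only [this, ENNReal.ofReal_one]
    rw [i1, i2, ENNReal.toReal_add (ENNReal.mul_ne_top ENNReal.ofReal_ne_top fD) fA,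
      ENNReal.toReal_mul, ENNReal.toReal_ofReal (S.alpha_pos _).le]
  rw [hR, lintegral_add_measure, Measure.add_apply, ENNReal.toReal_add fc1 fc2,
    ENNReal.toReal_add f1 f2]
  have hec : (ME Set.univ).toReal + (MA Set.univ).toReal = 1 := by
    rw [← ENNReal.toReal_add fE fA, ← Measure.add_apply, Measure.restrict_add_restrict_compl hEm,
      hmu, ENNReal.toReal_one]
  have hL := S.logB_nonneg (k + l)
  have hCB : 0 ≤ S.Cseq (k + n) / Bconst S.κ S.r (k + n) :=
    div_nonneg (S.hC_pos _).le (S.Bpos _).le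
  have s1 := ENNReal.toReal_mono (ENNReal.mul_ne_top ENNReal.ofReal_ne_top fD) p3
  have s2 := ENNReal.toReal_mono (ENNReal.mul_ne_top ENNReal.ofReal_ne_top f2) q3
  have s3 := ENNReal.toReal_mono
    (ENNReal.add_ne_top.2 ⟨f1, ENNReal.mul_ne_top ENNReal.ofReal_ne_top fD⟩) p4
  have s4 := ENNReal.toReal_mono f2 q4
  have pl : 0 ≤ S.alphaC k * S.r ^ l := mul_nonneg (S.alpha_pos k).le (pow_nonneg S.hr.1.le _)
  have pn : 0 ≤ S.alphaC k * S.r ^ n := mul_nonneg (S.alpha_pos k).le (pow_nonneg S.hr.1.le _)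
  rw [ENNReal.toReal_mul, ENNReal.toReal_ofReal pl] at s1
  rw [ENNReal.toReal_mul, ENNReal.toReal_ofReal pn] at s2
  rw [ENNReal.toReal_add f1 (ENNReal.mul_ne_top ENNReal.ofReal_ne_top fD),
    ENNReal.toReal_mul, ENNReal.toReal_ofReal hL] at s3
  rw [ENNReal.toReal_mul, ENNReal.toReal_ofReal hCB] at s4
  have hd0 : 0 ≤ (∫⁻ p, S.D p ∂ME).toReal := ENNReal.toReal_nonneg
  have hc0 : 0 ≤ (MA Set.univ).toReal := ENNReal.toReal_nonneg
  generalize (∫⁻ p, S.D p ∂ME).toReal = d at *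
  generalize (MA Set.univ).toReal = c at *
  generalize (ME Set.univ).toReal = e at *
  generalize (M1 Set.univ).toReal = x1 at *
  generalize (M2 Set.univ).toReal = x2 at *
  generalize (∫⁻ p, ENNReal.ofReal (S.dbar k p.1 p.2) ∂M1).toReal = c1 at *
  generalize (∫⁻ p, ENNReal.ofReal (S.dbar k p.1 p.2) ∂M2).toReal = c2 at *
  have hn1 : S.alphaC k * S.r ^ n < 1 := S.rn_alpha k
  have hl1 : S.alphaC k * S.r ^ l ≤ 1 := by
    refine le_trans (mul_le_mul_of_nonneg_left ?_ (S.alpha_pos k).le) hn1.le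
    exact pow_le_pow_of_le_one S.hr.1.le S.hr.2.le (by omega)
  have hexp : logB S.κ S.r (k + l) + 1 ≤ S.β * S.alphaC (k + l) := by
    have h1 := Real.add_one_le_exp (logB S.κ S.r (k + l))
    have h2 : S.β * S.alphaC (k + l) = Real.exp (logB S.κ S.r (k + l)) := by
      unfold alphaC Bconst
      field_simp [S.hβ.1.ne']
    rw [h2]; exact h1
  have t1 : S.β ≤ S.tconst k := le_max_left _ _
  have t2 : S.sconst k ≤ S.tconst k := le_max_right _ _
  have k1 : c1 + e - x1 ≤ S.tconst k * (S.alphaC (k + l) * d) := by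
    have h1 : c1 + e - x1 ≤ (S.alphaC k * S.r ^ l + logB S.κ S.r (k + l)) * d := by linarith
    have h2 : (S.alphaC k * S.r ^ l + logB S.κ S.r (k + l)) * d ≤
        (S.β * S.alphaC (k + l)) * d := mul_le_mul_of_nonneg_right (by linarith) hd0
    have h3 : S.β * (S.alphaC (k + l) * d) ≤ S.tconst k * (S.alphaC (k + l) * d) :=
      mul_le_mul_of_nonneg_right t1 (mul_nonneg (S.alpha_pos _).le hd0)
    linarith
  have k2 : c2 + c - x2 ≤ S.tconst k * c := by
    have h1 : (1 - S.alphaC k * S.r ^ n) * (S.Cseq (k + n) / Bconst S.κ S.r (k + n) * c) ≤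
        (1 - S.alphaC k * S.r ^ n) * x2 := mul_le_mul_of_nonneg_left s4 (by linarith)
    have h2 : S.sconst k * c ≤ S.tconst k * c := mul_le_mul_of_nonneg_right t2 hc0
    have h3 : S.sconst k * c = c -
        (1 - S.alphaC k * S.r ^ n) * (S.Cseq (k + n) / Bconst S.κ S.r (k + n) * c) := by
      unfold sconst
      rw [← hn]
      ring
    linarith
  linarith

lemma tconst_pos (S : HstarSystem) (k : ℕ) : 0 < S.tconst k :=
  S.hβ.1.trans_le (le_max_left _ _)

lemma tconst_lt_one (S : HstarSystem) (k : ℕ) : S.tconst k < 1 := by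
  refine max_lt S.hβ.2 ?_
  unfold sconst
  have h1 := S.rn_alpha k
  have : 0 < (1 - S.r ^ S.nseq k * S.alphaC k) * S.Cseq (k + S.nseq k) /
      Bconst S.κ S.r (k + S.nseq k) :=
    div_pos (mul_pos (by linarith) (S.hC_pos _)) (S.Bpos _)
  linarith

end HstarSystem

/-- (Lemma, part (iv).) Under property `(H*)`, with `l_k = n_k + m_{k+n_k}`,
the dual Ruelle operator over `l_k` steps contracts the Vasershtein distance with respect to
the metrics `d̄` by `t_k = max{β, 1 − (1 − r^{n_k} α_k) C_{k+n_k}/B_{k+n_k}} ∈ (0,1)`. -/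
theorem dual_ruelle_wasserstein_contraction (S : HstarSystem) (k : ℕ)
    (μ ν : Measure Seq)
    (hμp : IsProbabilityMeasure μ) (hμs : μ (Sig S.W S.A (k + S.lconst k)) = 1)
    (hνp : IsProbabilityMeasure ν) (hνs : ν (Sig S.W S.A (k + S.lconst k)) = 1) :
    0 < S.tconst k ∧ S.tconst k < 1 ∧
      Wass (S.dbar k) (dualRuelleIter S.W S.A S.φ k (S.lconst k) μ)
          (dualRuelleIter S.W S.A S.φ k (S.lconst k) ν) ≤
        S.tconst k * Wass (S.dbar (k + S.lconst k)) μ ν := by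
  refine ⟨S.tconst_pos k, S.tconst_lt_one k, ?_⟩
  rw [← div_le_iff₀' (S.tconst_pos k)]
  refine le_csInf ⟨_, μ.prod ν, by simp, by simp, rfl⟩ ?_
  rintro _ ⟨m, h1, h2, rfl⟩
  rw [div_le_iff₀' (S.tconst_pos k)]
  exact S.contraction_coupling k μ ν hμp hμs hνp hνs m h1 h2

end NSShift
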